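/- Let f = Y³ + X² + X³ in the polynomial ring F_2[X, Y] over the field with two elements. Then the quotient ring F_2[X, Y]/J, where J is the ideal generated by the two partial derivatives ∂f/∂X and ∂f/∂Y, is a 4-dimensional vector space over F_2. (Explicitly, in characteristic 2 one has ∂f/∂X = X² and ∂f/∂Y = Y², so J = (X², Y²) and the quotient has basis 1, X, Y, XY.) -/

import Mathlib

open MvPolynomial

noncomputable def expo (a : Fin 2 → Fin 2) : Fin 2 →₀ ℕ :=
  Finsupp.equivFunOnFinite.symm (fun i => (a i : ℕ))

lemma expo_inj : Function.Injective expo := by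
  intro a b h
  funext i
  have := DFunLike.congr_fun h i
  exact Fin.ext (by simpa [expo] using this)

noncomputable def coeffMap :
    MvPolynomial (Fin 2) (ZMod 2) →ₗ[ZMod 2] ((Fin 2 → Fin 2) → ZMod 2) :=
  LinearMap.pi (fun a => lcoeff (ZMod 2) (expo a))

lemma coeffMap_apply (p : MvPolynomial (Fin 2) (ZMod 2)) (a : Fin 2 → Fin 2) :
    coeffMap p a = coeff (expo a) p := rfl

lemma coeffMap_surj : Function.Surjective coeffMap := by
  intro g
  refine ⟨∑ a, monomial (expo a) (g a), ?_⟩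
  funext b
  rw [coeffMap_apply, coeff_sum]
  simp [coeff_monomial, expo_inj.eq_iff]

lemma ker_coeffMap (J : Ideal (MvPolynomial (Fin 2) (ZMod 2)))
    (hJ : J = Ideal.span ((fun s => monomial s (1 : ZMod 2)) ''
      {Finsupp.single 0 2, Finsupp.single 1 2})) :
    LinearMap.ker coeffMap = J.restrictScalars (ZMod 2) := by
  ext p
  rw [Submodule.restrictScalars_mem, hJ, mem_ideal_span_monomial_image, LinearMap.mem_ker]
  simp only [Set.mem_insert_iff, Set.mem_singleton_iff, exists_eq_or_imp, exists_eq_left,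
    Finsupp.single_le_iff, mem_support_iff]
  constructor
  · intro h m hm
    by_contra! hc
    apply hm
    have := congrFun h ![⟨m 0, hc.1⟩, ⟨m 1, hc.2⟩]
    rw [coeffMap_apply, Pi.zero_apply] at this
    convert this using 2
    ext i
    fin_cases i <;> simp [expo]
  · intro h
    funext a
    rw [coeffMap_apply]
    by_contra hc
    have h1 := h _ hc
    simp only [expo, Finsupp.equivFunOnFinite_symm_apply_apply] at h1
    omega

/-- For `f = Y³ + X² + X³` over `F_2`, the Jacobian quotient `F_2[X,Y]/(∂f/∂X, ∂f/∂Y)`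
is a 4-dimensional `F_2`-vector space. -/
theorem jacobian_quotient_dim_char_two :
    let f : MvPolynomial (Fin 2) (ZMod 2) := X 1 ^ 3 + X 0 ^ 2 + X 0 ^ 3
    let J : Ideal (MvPolynomial (Fin 2) (ZMod 2)) :=
      Ideal.span {pderiv 0 f, pderiv 1 f}
    Module.finrank (ZMod 2) (MvPolynomial (Fin 2) (ZMod 2) ⧸ J) = 4 := by
  intro f J
  have h2 : (2 : MvPolynomial (Fin 2) (ZMod 2)) = 0 := CharTwo.two_eq_zero
  have h3 : (3 : MvPolynomial (Fin 2) (ZMod 2)) = 1 := by linear_combination h2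
  have e0 : pderiv 0 f = X 0 ^ 2 := by
    simp [f, pderiv_X, Derivation.leibniz_pow, h2, h3]
  have e1 : pderiv 1 f = X 1 ^ 2 := by
    simp [f, pderiv_X, Derivation.leibniz_pow, h2, h3]
  have hJ : J = Ideal.span ((fun s => monomial s (1 : ZMod 2)) ''
      {Finsupp.single 0 2, Finsupp.single 1 2}) := by
    simp only [J, e0, e1, Set.image_pair, X_pow_eq_monomial]
  have hk := ker_coeffMap J hJ
  have e := (Submodule.Quotient.restrictScalarsEquiv (ZMod 2) J).symm.trans
    ((Submodule.quotEquivOfEq _ _ hk.symm).trans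
      (coeffMap.quotKerEquivOfSurjective coeffMap_surj))
  rw [e.finrank_eq]
  simp
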